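/- There exists a function f : [0,1] → ℝ, Hölder continuous of every exponent α ∈ (0,1), such that L¹(f(S)) = 1 while the pushforward measure f_#(𝟙_S L¹) is concentrated on the rational numbers (so that f_#(𝟙_S L¹) ⊥ L¹), where S is the critical set of f. -/

import Mathlib

open MeasureTheory Set

noncomputable section

/-- The critical set of `f : [0,1] → ℝ`: points of `[0,1]` where `f` is either not
differentiable or has zero derivative. -/
def critSet1 (f : ℝ → ℝ) : Set ℝ :=
  {x | x ∈ Set.Icc (0:ℝ) 1 ∧
    (¬ DifferentiableWithinAt ℝ f (Set.Icc (0:ℝ) 1) x ∨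
      derivWithin f (Set.Icc (0:ℝ) 1) x = 0)}

/-- `f` is Hölder continuous of exponent `α` on `[0,1]`. -/
def HolderOnUnit (f : ℝ → ℝ) (α : ℝ) : Prop :=
  ∃ C : ℝ, ∀ x ∈ Set.Icc (0:ℝ) 1, ∀ y ∈ Set.Icc (0:ℝ) 1, |f x - f y| ≤ C * |x - y| ^ α

/-!
Let `μ` be a probability measure on `[0,1]` consisting of atoms at the dyadic rationals, with
mass `2⁻ⁿ / ((n + 1) (n + 2))` at each of the points `j / 2ⁿ`, `1 ≤ j ≤ 2ⁿ`, for every `n`. Its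
quantile function `f` pushes Lebesgue measure forward to `μ`, so `f` takes rational values almost
everywhere. By monotonicity, `μ (f x, f y) ≤ y - x` for `x ≤ y`; since `μ (a, b)` is at least a
constant multiple of `(b - a) ^ (1 / α)` for every `α < 1`, the function `f` is `α`-Hölder. It is
onto because `μ` charges every interval.

Outside its critical set `f` is differentiable, hence maps null sets to null sets. The
noncritical points with irrational value form a null set, and the rational values are countable,
so the image of the noncritical points is null and the critical set carries all of `f([0,1])`.
-/

open Filter Topology
open scoped unitInterval NNReal ENNReal

/-! ### Critical points -/

section CriticalSet

variable {f : ℝ → ℝ} {s : Set ℝ}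

lemma critSet1_subset_Icc (f : ℝ → ℝ) : critSet1 f ⊆ Icc 0 1 := fun _ hx => hx.1

lemma differentiableOn_sdiff_critSet1 (f : ℝ → ℝ) :
    DifferentiableOn ℝ f (Icc 0 1 \ critSet1 f) := by
  intro x hx
  have hdiff : DifferentiableWithinAt ℝ f (Icc 0 1) x :=
    not_not.1 fun hnot => hx.2 ⟨hx.1, Or.inl hnot⟩
  exact hdiff.mono sdiff_subset

lemma volume_image_sdiff_critSet1 (hs : volume s = 0)
    (hfs : volume (Icc 0 1 ∩ f ⁻¹' sᶜ) = 0) : volume (f '' (Icc 0 1 \ critSet1 f)) = 0 := by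
  set N : Set ℝ := (Icc 0 1 \ critSet1 f) ∩ f ⁻¹' sᶜ
  have hN : volume N = 0 :=
    measure_mono_null (inter_subset_inter_left _ sdiff_subset) hfs
  have himage : volume (f '' N) = 0 :=
    addHaar_image_eq_zero_of_differentiableOn_of_addHaar_eq_zero volume
      ((differentiableOn_sdiff_critSet1 f).mono inter_subset_left) hN
  refine measure_mono_null ?_ (measure_union_null hs himage)
  rintro _ ⟨x, hx, rfl⟩
  by_cases hxs : f x ∈ s
  · exact Or.inl hxs
  · exact Or.inr ⟨x, ⟨hx, hxs⟩, rfl⟩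

lemma volume_image_critSet1 (hs : volume s = 0) (hfs : volume (Icc 0 1 ∩ f ⁻¹' sᶜ) = 0) :
    volume (f '' critSet1 f) = volume (f '' Icc 0 1) := by
  refine le_antisymm (measure_mono (image_mono (critSet1_subset_Icc f))) ?_
  calc volume (f '' Icc 0 1) = volume (f '' critSet1 f ∪ f '' (Icc 0 1 \ critSet1 f)) := by
        rw [← image_union, union_sdiff_cancel (critSet1_subset_Icc f)]
    _ ≤ volume (f '' critSet1 f) + volume (f '' (Icc 0 1 \ critSet1 f)) := measure_union_le _ _
    _ = volume (f '' critSet1 f) := by rw [volume_image_sdiff_critSet1 hs hfs, add_zero]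

lemma map_restrict_critSet1_compl (hf : Measurable f) (hs : MeasurableSet s)
    (hfs : volume (Icc 0 1 ∩ f ⁻¹' sᶜ) = 0) :
    Measure.map f (volume.restrict (critSet1 f)) sᶜ = 0 := by
  rw [Measure.map_apply hf hs.compl, Measure.restrict_apply (hf hs.compl), inter_comm]
  exact measure_mono_null (inter_subset_inter_left _ (critSet1_subset_Icc f)) hfs

end CriticalSet

/-! ### Extending functions from the unit interval -/

section IccExtend

variable {g : I → ℝ}

lemma holderOnUnit_IccExtend {C α : ℝ≥0} (hg : HolderWith C α g) :
    HolderOnUnit (IccExtend zero_le_one g) α := by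
  refine ⟨C, fun x hx y hy => ?_⟩
  rw [IccExtend_of_mem _ _ hx, IccExtend_of_mem _ _ hy]
  exact hg.dist_le ⟨x, hx⟩ ⟨y, hy⟩

lemma image_IccExtend_Icc (g : I → ℝ) : IccExtend zero_le_one g '' Icc 0 1 = range g := by
  rw [← Subtype.range_coe (s := Icc (0 : ℝ) 1), ← range_comp]
  exact congrArg range (funext (IccExtend_val _ g))

lemma volume_Icc_inter_preimage_IccExtend (g : I → ℝ) (s : Set ℝ) :
    volume (Icc 0 1 ∩ IccExtend zero_le_one g ⁻¹' s) = volume (g ⁻¹' s) := by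
  have hval : IccExtend zero_le_one g ∘ Subtype.val = g := funext (IccExtend_val _ g)
  conv_rhs => rw [← hval]
  rw [unitInterval.volume_apply, preimage_comp, Subtype.image_preimage_coe]

end IccExtend

/-! ### Quantile functions -/

section Quantile

variable {β : Type*} [MeasurableSpace β]

/-- The cumulative distribution function `y ↦ μ (-∞, y]`, with values in the unit interval so that
it can be adjoint to the quantile function. -/
def unitCDF [Preorder β] (μ : Measure β) [IsProbabilityMeasure μ] (y : β) : I :=
  ⟨μ.real (Iic y), measureReal_nonneg, measureReal_le_one⟩

/-- The quantile function of `μ`: the generalized inverse of its cumulative distribution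
function. Completeness of `β` gives it a meaningful value also at the endpoints of `I`. -/
def quantile [CompleteLinearOrder β] (μ : Measure β) [IsProbabilityMeasure μ] (x : I) : β :=
  sInf {y | x ≤ unitCDF μ y}

lemma ofReal_unitCDF [Preorder β] (μ : Measure β) [IsProbabilityMeasure μ] (y : β) :
    ENNReal.ofReal (unitCDF μ y) = μ (Iic y) :=
  ofReal_measureReal

lemma le_unitCDF_iff [Preorder β] (μ : Measure β) [IsProbabilityMeasure μ] {x : I} {y : β} :
    x ≤ unitCDF μ y ↔ ENNReal.ofReal x ≤ μ (Iic y) := by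
  rw [← ofReal_unitCDF, ENNReal.ofReal_le_ofReal_iff (unitCDF μ y).2.1, Subtype.coe_le_coe]

lemma monotone_unitCDF [Preorder β] (μ : Measure β) [IsProbabilityMeasure μ] :
    Monotone (unitCDF μ) := fun _ _ hyz =>
  Subtype.coe_le_coe.1 (measureReal_mono (Iic_subset_Iic.2 hyz))

lemma unitCDF_top [Preorder β] [OrderTop β] (μ : Measure β) [IsProbabilityMeasure μ] :
    unitCDF μ ⊤ = 1 :=
  Subtype.ext (by simp [unitCDF])

lemma strictMono_unitCDF [LinearOrder β] [DenselyOrdered β] [TopologicalSpace β]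
    [OrderTopology β] [OpensMeasurableSpace β] (μ : Measure β) [IsProbabilityMeasure μ]
    [μ.IsOpenPosMeasure] : StrictMono (unitCDF μ) := by
  intro a b hab
  have hpos : 0 < μ (Ioc a b) :=
    (isOpen_Ioo.measure_pos μ (nonempty_Ioo.2 hab)).trans_le (measure_mono Ioo_subset_Ioc_self)
  refine Subtype.coe_lt_coe.1 ?_
  calc μ.real (Iic a) < μ.real (Iic a) + μ.real (Ioc a b) :=
        lt_add_of_pos_right _ (ENNReal.toReal_pos hpos.ne' (measure_ne_top μ _))
    _ = μ.real (Iic b) := by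
      rw [← measureReal_union (Iic_disjoint_Ioc le_rfl) measurableSet_Ioc,
        Iic_union_Ioc_eq_Iic hab.le]

variable [CompleteLinearOrder β] [TopologicalSpace β] [OrderTopology β]
  (μ : Measure β) [IsProbabilityMeasure μ]

lemma le_unitCDF_quantile [FirstCountableTopology β] [OpensMeasurableSpace β] (x : I) :
    x ≤ unitCDF μ (quantile μ x) := by
  have hne : {y | x ≤ unitCDF μ y}.Nonempty :=
    ⟨⊤, unitInterval.le_one'.trans_eq (unitCDF_top μ).symm⟩
  obtain ⟨u, hu, hlim, hmem⟩ := exists_seq_tendsto_sInf hne (OrderBot.bddBelow _)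
  have hInter : Iic (quantile μ x) = ⋂ n, Iic (u n) := by
    ext z
    rw [mem_iInter]
    exact (le_isGLB_iff (isGLB_of_tendsto_atTop hu hlim)).trans forall_mem_range
  have hInf : μ (Iic (quantile μ x)) = ⨅ n, μ (Iic (u n)) := by
    rw [hInter]
    exact Antitone.measure_iInter (fun _ _ hmn => Iic_subset_Iic.2 (hu hmn))
      (fun _ => measurableSet_Iic.nullMeasurableSet) ⟨0, measure_ne_top μ _⟩
  rw [le_unitCDF_iff, hInf]
  exact le_iInf fun n => (le_unitCDF_iff μ).1 (hmem n)

lemma gc_quantile_unitCDF [FirstCountableTopology β] [OpensMeasurableSpace β] :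
    GaloisConnection (quantile μ) (unitCDF μ) := fun x _ =>
  ⟨fun h => (le_unitCDF_quantile μ x).trans (monotone_unitCDF μ h), fun h => sInf_le h⟩

lemma quantile_surjective [FirstCountableTopology β] [OpensMeasurableSpace β] [DenselyOrdered β]
    [μ.IsOpenPosMeasure] : Function.Surjective (quantile μ) := fun y =>
  ⟨unitCDF μ y, (strictMono_unitCDF μ).injective ((gc_quantile_unitCDF μ).u_l_u_eq_u y)⟩

variable [SecondCountableTopology β] [BorelSpace β]

lemma measurable_quantile : Measurable (quantile μ) :=
  (gc_quantile_unitCDF μ).monotone_l.measurable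

lemma map_quantile_volume : (volume : Measure I).map (quantile μ) = μ := by
  refine Measure.ext_of_Iic _ _ fun y => ?_
  have hpreimage : quantile μ ⁻¹' Iic y = Iic (unitCDF μ y) :=
    Set.ext fun x => gc_quantile_unitCDF μ x y
  rw [Measure.map_apply (measurable_quantile μ) measurableSet_Iic, hpreimage,
    unitInterval.volume_Iic, ofReal_unitCDF]

end Quantile

/-! ### Hölder continuity from the pushforward of Lebesgue measure -/

section Holder

variable {β : Type*} [LinearOrder β] [MeasurableSpace β] {f : I → β}

lemma map_volume_Ioo_le_edist [TopologicalSpace β] [OrderClosedTopology β]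
    [OpensMeasurableSpace β] (hf : Measurable f) (hmono : Monotone f) (x y : I) :
    (volume : Measure I).map f (Ioo (f x) (f y)) ≤ edist x y := by
  rw [Measure.map_apply hf measurableSet_Ioo, edist_comm, ← unitInterval.volume_uIcc]
  refine measure_mono fun z hz => Icc_subset_uIcc ?_
  exact ⟨(hmono.reflect_lt hz.1).le, (hmono.reflect_lt hz.2).le⟩

lemma holderWith_of_edist_le_map_volume_Ioo [PseudoEMetricSpace β] [OrderClosedTopology β]
    [OpensMeasurableSpace β] {C α : ℝ≥0} (hf : Measurable f) (hmono : Monotone f)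
    (hvol : ∀ a b, a < b → edist a b ≤ C * (volume : Measure I).map f (Ioo a b) ^ (α : ℝ)) :
    HolderWith C α f := by
  intro x y
  wlog hxy : x ≤ y generalizing x y
  · rw [edist_comm, edist_comm x]
    exact this y x (le_of_not_ge hxy)
  rcases (hmono hxy).eq_or_lt with heq | hlt
  · simp [heq]
  · refine (hvol _ _ hlt).trans ?_
    gcongr
    exact map_volume_Ioo_le_edist hf hmono x y

end Holder

/-! ### The dyadic measure -/

/-- The mass `2⁻ⁿ / ((n + 1) (n + 2))` of an atom of level `n`: the `2 ^ n` atoms of that level have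
total mass `1 / ((n + 1) (n + 2))`, and these sum to `1`. -/
def dyadicMass (n : ℕ) : ℝ := (1 / 2) ^ n / ((n + 1) * (n + 2))

/-- The dyadic rational `(k + 1) / 2 ^ n` of level `n`, for `k < 2 ^ n`. -/
def dyadicPoint (n : ℕ) (k : Fin (2 ^ n)) : I :=
  ⟨(k + 1) / 2 ^ n, unitInterval.div_mem (by positivity) (by positivity)
    (by exact_mod_cast k.is_lt)⟩

/-- The purely atomic measure giving mass `dyadicMass n` to each dyadic point of level `n`; a
number has one atom for each level at which it appears. -/
def dyadicMeasure : Measure I :=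
  Measure.sum fun i : Σ n, Fin (2 ^ n) =>
    ENNReal.ofReal (dyadicMass i.1) • Measure.dirac (dyadicPoint i.1 i.2)

lemma dyadicMass_pos (n : ℕ) : 0 < dyadicMass n := by unfold dyadicMass; positivity

lemma hasSum_one_div_succ_mul_succ : HasSum (fun n : ℕ => 1 / (((n : ℝ) + 1) * (n + 2))) 1 := by
  have hsum (n : ℕ) : ∑ i ∈ Finset.range n, 1 / (((i : ℝ) + 1) * (i + 2)) = 1 - 1 / (n + 1) := by
    induction n with
    | zero => simp
    | succ n ih =>
      rw [Finset.sum_range_succ, ih]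
      push_cast
      field_simp
      ring
  rw [hasSum_iff_tendsto_nat_of_nonneg fun n => by positivity]
  simp_rw [hsum]
  simpa using (tendsto_one_div_add_atTop_nhds_zero_nat (𝕜 := ℝ)).const_sub 1

lemma hasSum_dyadicMass : HasSum (fun i : Σ n, Fin (2 ^ n) => dyadicMass i.1) 1 := by
  have hlevel (n : ℕ) :
      HasSum (fun _ : Fin (2 ^ n) => dyadicMass n) (1 / (((n : ℝ) + 1) * (n + 2))) := by
    have hcard : ∑ _k : Fin (2 ^ n), dyadicMass n = 1 / (((n : ℝ) + 1) * (n + 2)) := by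
      simp only [Finset.sum_const, Finset.card_univ, Fintype.card_fin, nsmul_eq_mul, dyadicMass]
      push_cast
      field_simp
      simp
    exact hcard ▸ hasSum_fintype _
  refine hasSum_one_div_succ_mul_succ.sigma_of_hasSum hlevel ?_
  rw [summable_sigma_of_nonneg fun i => (dyadicMass_pos i.1).le]
  refine ⟨fun n => (hlevel n).summable, ?_⟩
  simpa only [(hlevel _).tsum_eq] using hasSum_one_div_succ_mul_succ.summable

instance : IsProbabilityMeasure dyadicMeasure :=
  HasSum.isProbabilityMeasure_sum_dirac (fun i => (dyadicMass_pos i.1).le) hasSum_dyadicMass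

lemma ae_dyadicMeasure_mem_range_ratCast :
    ∀ᵐ y : I ∂dyadicMeasure, (y : ℝ) ∈ range ((↑) : ℚ → ℝ) := by
  refine Measure.ae_sum_iff.2 fun ⟨n, k⟩ => Measure.ae_smul_measure ?_ _
  rw [ae_dirac_eq]
  exact ⟨(k + 1) / 2 ^ n, by simp [dyadicPoint]⟩

lemma exists_dyadicPoint_mem_Ioo {n : ℕ} {a b : I} (h : (1 / 2 : ℝ) ^ n < b - a) :
    ∃ k, dyadicPoint n k ∈ Ioo a b := by
  have hpow : (0 : ℝ) < 2 ^ n := by positivity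
  rw [one_div_pow, div_lt_iff₀ hpow] at h
  have hfloor : (⌊a * (2 : ℝ) ^ n⌋₊ : ℝ) ≤ a * 2 ^ n :=
    Nat.floor_le (mul_nonneg a.2.1 hpow.le)
  have hk : ⌊a * (2 : ℝ) ^ n⌋₊ < 2 ^ n := by
    have : (⌊a * (2 : ℝ) ^ n⌋₊ : ℝ) < 2 ^ n := by nlinarith [b.2.2]
    exact_mod_cast this
  refine ⟨⟨_, hk⟩, Subtype.coe_lt_coe.1 ?_, Subtype.coe_lt_coe.1 ?_⟩
  · exact (lt_div_iff₀ hpow).2 (Nat.lt_floor_add_one _)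
  · exact (div_lt_iff₀ hpow).2 (by linarith)

lemma dyadicMass_le_dyadicMeasure_Ioo {n : ℕ} {a b : I} (h : (1 / 2 : ℝ) ^ n < b - a) :
    ENNReal.ofReal (dyadicMass n) ≤ dyadicMeasure (Ioo a b) := by
  obtain ⟨k, hk⟩ := exists_dyadicPoint_mem_Ioo h
  calc ENNReal.ofReal (dyadicMass n)
      = (ENNReal.ofReal (dyadicMass n) • Measure.dirac (dyadicPoint n k)) (Ioo a b) := by
        rw [Measure.smul_apply, Measure.dirac_apply_of_mem hk, smul_eq_mul, mul_one]
    _ ≤ dyadicMeasure (Ioo a b) := Measure.le_sum _ (⟨n, k⟩ : Σ n, Fin (2 ^ n)) _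

instance : dyadicMeasure.IsOpenPosMeasure where
  open_pos U hU hne := by
    obtain ⟨a, b, hab, hsub⟩ := hU.exists_Ioo_subset hne
    have hlen : (0 : ℝ) < b - a := sub_pos.2 (Subtype.coe_lt_coe.2 hab)
    obtain ⟨n, hn⟩ := exists_pow_lt_of_lt_one hlen (one_half_lt_one (α := ℝ))
    have hmass : 0 < ENNReal.ofReal (dyadicMass n) := ENNReal.ofReal_pos.2 (dyadicMass_pos n)
    exact (hmass.trans_le ((dyadicMass_le_dyadicMeasure_Ioo hn).trans (measure_mono hsub))).ne'

lemma exists_succ_mul_succ_mul_pow_le {r : ℝ} (hr : |r| < 1) :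
    ∃ M : ℝ≥0, ∀ n : ℕ, ((n : ℝ) + 1) * (n + 2) * r ^ n ≤ M := by
  have hlim : Tendsto (fun n : ℕ => (n : ℝ) ^ 2 * r ^ n + 3 * (n * r ^ n) + 2 * r ^ n) atTop
      (𝓝 (0 + 3 * 0 + 2 * 0)) :=
    ((tendsto_pow_const_mul_const_pow_of_abs_lt_one 2 hr).add
      ((tendsto_self_mul_const_pow_of_abs_lt_one hr).const_mul 3)).add
      ((tendsto_pow_atTop_nhds_zero_of_abs_lt_one hr).const_mul 2)
  obtain ⟨M, hM⟩ := hlim.bddAbove_range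
  refine ⟨M.toNNReal, fun n => ?_⟩
  calc ((n : ℝ) + 1) * (n + 2) * r ^ n = n ^ 2 * r ^ n + 3 * (n * r ^ n) + 2 * r ^ n := by ring
    _ ≤ M := hM ⟨n, rfl⟩
    _ ≤ M.toNNReal := M.le_coe_toNNReal

lemma exists_pow_le_mul_dyadicMass_rpow {α : ℝ} (hα : α < 1) :
    ∃ M : ℝ≥0, ∀ n : ℕ, (1 / 2 : ℝ) ^ n ≤ M * dyadicMass n ^ α := by
  set r : ℝ := (1 / 2) ^ (1 - α)
  have hr : |r| < 1 := by
    rw [abs_of_nonneg (by positivity)]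
    exact Real.rpow_lt_one (by norm_num) (by norm_num) (sub_pos.2 hα)
  obtain ⟨M, hM⟩ := exists_succ_mul_succ_mul_pow_le hr
  refine ⟨M, fun n => ?_⟩
  set P : ℝ := (n + 1) * (n + 2) with hP
  have hP1 : 1 ≤ P := by rw [hP]; nlinarith [n.cast_nonneg (α := ℝ)]
  have hPα : P ^ α ≤ P := by
    simpa using Real.rpow_le_rpow_of_exponent_le hP1 hα.le
  have hrn : r ^ n = ((1 / 2 : ℝ) ^ n) ^ (1 - α) :=
    Real.rpow_pow_comm (by norm_num) _ _
  have hbound : r ^ n ≤ M / P ^ α := by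
    rw [le_div_iff₀ (by positivity)]
    calc r ^ n * P ^ α ≤ r ^ n * P := by gcongr
      _ ≤ M := by rw [mul_comm]; exact hM n
  calc (1 / 2 : ℝ) ^ n = ((1 / 2 : ℝ) ^ n) ^ α * r ^ n := by
        rw [hrn, ← Real.rpow_add (by positivity), add_sub_cancel, Real.rpow_one]
    _ ≤ ((1 / 2 : ℝ) ^ n) ^ α * (M / P ^ α) := by gcongr
    _ = M * dyadicMass n ^ α := by
        rw [dyadicMass, Real.div_rpow (by positivity) (by positivity)]
        ring

lemma exists_edist_le_mul_dyadicMeasure_Ioo {α : ℝ≥0} (hα : α < 1) :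
    ∃ C : ℝ≥0, ∀ a b : I, a < b → edist a b ≤ C * dyadicMeasure (Ioo a b) ^ (α : ℝ) := by
  obtain ⟨M, hM⟩ := exists_pow_le_mul_dyadicMass_rpow (NNReal.coe_lt_one.2 hα)
  refine ⟨2 * M, fun a b hab => ?_⟩
  have hlen : (0 : ℝ) < b - a := sub_pos.2 (Subtype.coe_lt_coe.2 hab)
  have hlen_le : (b : ℝ) - a ≤ 1 := by linarith [a.2.1, b.2.2]
  obtain ⟨n, hlt, hle⟩ :=
    exists_nat_pow_near_of_lt_one hlen hlen_le one_half_pos one_half_lt_one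
  have hdist : dist a b ≤ (2 * M : ℝ≥0) * dyadicMass (n + 1) ^ (α : ℝ) := by
    calc dist a b = b - a := by
          rw [Subtype.dist_eq, dist_comm, Real.dist_eq, abs_of_pos hlen]
      _ ≤ 2 * (1 / 2) ^ (n + 1) := by rw [pow_succ]; linarith
      _ ≤ 2 * (M * dyadicMass (n + 1) ^ (α : ℝ)) := by gcongr; exact hM _
      _ = (2 * M : ℝ≥0) * dyadicMass (n + 1) ^ (α : ℝ) := by push_cast; ring
  calc edist a b = ENNReal.ofReal (dist a b) := edist_dist a b
    _ ≤ ENNReal.ofReal ((2 * M : ℝ≥0) * dyadicMass (n + 1) ^ (α : ℝ)) :=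
        ENNReal.ofReal_le_ofReal hdist
    _ = (2 * M : ℝ≥0) * ENNReal.ofReal (dyadicMass (n + 1)) ^ (α : ℝ) := by
        rw [ENNReal.ofReal_mul (NNReal.coe_nonneg _), ENNReal.ofReal_coe_nnreal,
          ENNReal.ofReal_rpow_of_pos (dyadicMass_pos _)]
    _ ≤ (2 * M : ℝ≥0) * dyadicMeasure (Ioo a b) ^ (α : ℝ) := by
        gcongr
        exact dyadicMass_le_dyadicMeasure_Ioo hlt

lemma exists_holderWith_quantile_dyadicMeasure {α : ℝ≥0} (hα : α < 1) :
    ∃ C : ℝ≥0, HolderWith C α (quantile dyadicMeasure) := by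
  obtain ⟨C, hC⟩ := exists_edist_le_mul_dyadicMeasure_Ioo hα
  refine ⟨C, holderWith_of_edist_le_map_volume_Ioo (measurable_quantile _)
    (gc_quantile_unitCDF _).monotone_l ?_⟩
  rwa [map_quantile_volume]

lemma volume_preimage_quantile_dyadicMeasure_irrational :
    volume ((Subtype.val ∘ quantile dyadicMeasure) ⁻¹' (range ((↑) : ℚ → ℝ))ᶜ) = 0 := by
  have hae := ae_dyadicMeasure_mem_range_ratCast
  rw [← map_quantile_volume dyadicMeasure] at hae
  exact ae_of_ae_map (measurable_quantile _).aemeasurable hae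

/-- There exists `f : [0,1] → ℝ` Hölder continuous of every exponent `α ∈ (0,1)` such that
`L¹(f(S)) = 1` while the pushforward `f_#(𝟙_S L¹)` is concentrated on the rationals
(hence `f_#(𝟙_S L¹) ⊥ L¹`), where `S` is the critical set of `f`. -/
theorem exists_holder_image_full_but_pushforward_on_rationals :
    ∃ f : ℝ → ℝ,
      (∀ α ∈ Set.Ioo (0:ℝ) 1, HolderOnUnit f α) ∧
      volume (f '' critSet1 f) = 1 ∧
      Measure.map f (volume.restrict (critSet1 f)) (Set.range ((↑) : ℚ → ℝ))ᶜ = 0 ∧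
      (Measure.map f (volume.restrict (critSet1 f))).MutuallySingular volume := by
  have hrange : range (Subtype.val ∘ quantile dyadicMeasure) = Icc (0 : ℝ) 1 := by
    rw [(quantile_surjective dyadicMeasure).range_comp, Subtype.range_coe]
  set f : ℝ → ℝ := IccExtend zero_le_one (Subtype.val ∘ quantile dyadicMeasure)
  have hmeas : Measurable f :=
    (measurable_quantile dyadicMeasure).subtype_val.comp continuous_projIcc.measurable
  have hrat : MeasurableSet (range ((↑) : ℚ → ℝ)) := (countable_range _).measurableSet
  have hrat_null : volume (range ((↑) : ℚ → ℝ)) = 0 := (countable_range _).measure_zero _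
  have hirr : volume (Icc 0 1 ∩ f ⁻¹' (range ((↑) : ℚ → ℝ))ᶜ) = 0 :=
    (volume_Icc_inter_preimage_IccExtend _ _).trans
      volume_preimage_quantile_dyadicMeasure_irrational
  have hpush := map_restrict_critSet1_compl hmeas hrat hirr
  refine ⟨f, fun α hα => ?_, ?_, hpush, _, hrat.compl, hpush, by rwa [compl_compl]⟩
  · lift α to ℝ≥0 using hα.1.le
    obtain ⟨C, hC⟩ := exists_holderWith_quantile_dyadicMeasure (NNReal.coe_lt_one.1 hα.2)
    exact holderOnUnit_IccExtend fun x y => hC x y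
  · rw [volume_image_critSet1 hrat_null hirr, image_IccExtend_Icc, hrange, Real.volume_Icc]
    simp
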